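/- Let (h_n, u_n, f_n) be a contradiction sequence. Then: (i) ‖h_n∇u_n‖²_{L²} − 1 = o(h_n) as n → ∞ (i.e. the semiclassical Dirichlet energy differs from ‖u_n‖²_{L²} = 1 by o(h_n)); and (ii) ∫_{ℝ^d} a(x)·‖h_n∇u_n(x)‖² dx = o(h_n²) as n → ∞. -/

import Mathlib

open MeasureTheory Complex ComplexConjugate

noncomputable section

/-- Partial derivative `∂u/∂xᵢ` of a complex-valued function on `ℝ^d`. -/
def pd {d : ℕ} (i : Fin d) (u : EuclideanSpace ℝ (Fin d) → ℂ)
    (x : EuclideanSpace ℝ (Fin d)) : ℂ :=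
  fderiv ℝ u x (EuclideanSpace.single i (1 : ℝ))

/-- Laplacian `Δu = ∑ᵢ ∂²u/∂xᵢ²` of a complex-valued function on `ℝ^d`. -/
def lap {d : ℕ} (u : EuclideanSpace ℝ (Fin d) → ℂ)
    (x : EuclideanSpace ℝ (Fin d)) : ℂ :=
  ∑ i : Fin d, pd i (pd i u) x

/-- The semiclassical Kelvin–Voigt operator
`P_h u = -h²Δu - u - i h (∇a·∇u + a Δu)`. -/
def Ph {d : ℕ} (h : ℝ) (a : EuclideanSpace ℝ (Fin d) → ℝ)
    (u : EuclideanSpace ℝ (Fin d) → ℂ) (x : EuclideanSpace ℝ (Fin d)) : ℂ :=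
  -(h ^ 2 : ℂ) * lap u x - u x -
    Complex.I * (h : ℂ) *
      ((∑ i : Fin d, (fderiv ℝ a x (EuclideanSpace.single i (1 : ℝ)) : ℂ) * pd i u x) +
        (a x : ℂ) * lap u x)

open Filter Asymptotics

section Derivatives

variable {d : ℕ} {u : EuclideanSpace ℝ (Fin d) → ℂ}

theorem ContDiff.pd {m n : WithTop ℕ∞} (hu : ContDiff ℝ n u) (hmn : m + 1 ≤ n) (i : Fin d) :
    ContDiff ℝ m (pd i u) :=
  (hu.fderiv_right hmn).clm_apply contDiff_const

theorem HasCompactSupport.pd (hu : HasCompactSupport u) (i : Fin d) :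
    HasCompactSupport (pd i u) :=
  hu.fderiv_apply ℝ _

theorem pd_conj (i : Fin d) (x : EuclideanSpace ℝ (Fin d)) :
    pd i (fun y => conj (u y)) x = conj (pd i u x) := by
  have := fderiv_star (𝕜 := ℝ) (f := u) (x := x)
  exact congrArg (fun L => L (EuclideanSpace.single i (1 : ℝ))) this

theorem pd_mul {v w : EuclideanSpace ℝ (Fin d) → ℂ} {x : EuclideanSpace ℝ (Fin d)}
    (hv : DifferentiableAt ℝ v x) (hw : DifferentiableAt ℝ w x) (i : Fin d) :
    pd i (fun y => v y * w y) x = pd i v x * w x + v x * pd i w x := by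
  simp only [pd, fderiv_fun_mul hv hw, add_apply, smul_apply, smul_eq_mul]
  ring

/-- Integration by parts for the divergence-form term `∂ᵢ(b ∂ᵢu)` tested against `u`. -/
theorem integral_conj_mul_pd_mul_pd {b : EuclideanSpace ℝ (Fin d) → ℂ} (hb : ContDiff ℝ 1 b)
    (hu : ContDiff ℝ 2 u) (hsupp : HasCompactSupport u) (i : Fin d) :
    ∫ x, conj (u x) * (pd i b x * pd i u x + b x * pd i (pd i u) x) =
      -∫ x, b x * (‖pd i u x‖ ^ 2 : ℝ) := by
  have hu1 : ContDiff ℝ 1 (pd i u) := hu.pd (by norm_num) i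
  have hc : ContDiff ℝ 1 (fun x => conj (u x)) :=
    conjCLE.contDiff.comp (hu.of_le (by norm_num))
  have hg : ContDiff ℝ 1 (fun x => b x * pd i u x) := hb.mul hu1
  have hcs : HasCompactSupport (fun x => conj (u x)) :=
    hsupp.comp_left (g := fun z : ℂ => conj z) (map_zero _)
  have hcp : Continuous (pd i (fun x => conj (u x))) :=
    (hc.pd (m := 0) (by norm_num) i).continuous
  have hgp : Continuous (pd i (fun x => b x * pd i u x)) :=
    (hg.pd (m := 0) (by norm_num) i).continuous
  have key := integral_mul_fderiv_eq_neg_fderiv_mul_of_integrable (μ := volume)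
    (f := fun x => conj (u x)) (g := fun x => b x * pd i u x)
    (v := EuclideanSpace.single i (1 : ℝ))
    ((hcp.mul hg.continuous).integrable_of_hasCompactSupport ((hcs.pd i).mul_right))
    ((hc.continuous.mul hgp).integrable_of_hasCompactSupport hcs.mul_right)
    ((hc.continuous.mul hg.continuous).integrable_of_hasCompactSupport hcs.mul_right)
    (fun x _ => hc.differentiable (by norm_num) x)
    (fun x _ => hg.differentiable (by norm_num) x)
  refine (integral_congr_ae (Eventually.of_forall fun x => ?_)).trans
    (key.trans (congrArg Neg.neg (integral_congr_ae (Eventually.of_forall fun x => ?_))))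
  · exact congrArg (conj (u x) * ·) (pd_mul (hb.differentiable (by norm_num) x)
      (hu1.differentiable (by norm_num) x) i).symm
  · change pd i (fun y => conj (u y)) x * (b x * pd i u x) = b x * ((‖pd i u x‖ ^ 2 : ℝ) : ℂ)
    rw [pd_conj, mul_left_comm, conj_mul']
    push_cast
    ring

end Derivatives

section Energy

variable {d : ℕ} {a : EuclideanSpace ℝ (Fin d) → ℝ} {u : EuclideanSpace ℝ (Fin d) → ℂ}

theorem pd_const_add_const_mul_ofReal (ha : ContDiff ℝ 1 a) (c e : ℂ) (i : Fin d)
    (x : EuclideanSpace ℝ (Fin d)) :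
    pd i (fun y => c + e * (a y : ℂ)) x =
      e * (fderiv ℝ a x (EuclideanSpace.single i (1 : ℝ)) : ℂ) := by
  have h1 : HasFDerivAt a (fderiv ℝ a x) x :=
    (ha.differentiable (by norm_num) x).hasFDerivAt
  have h2 : HasFDerivAt (fun y => (a y : ℂ)) (ofRealCLM.comp (fderiv ℝ a x)) x :=
    ofRealCLM.hasFDerivAt.comp x h1
  have h3 := (h2.const_mul e).const_add c
  simp only [pd, h3.fderiv]
  simp

theorem Ph_eq_divergence_form (ha : ContDiff ℝ 1 a) (h : ℝ) (x : EuclideanSpace ℝ (Fin d)) :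
    Ph h a u x = -(∑ i, (pd i (fun y => (h ^ 2 : ℂ) + I * h * (a y : ℂ)) x * pd i u x +
      ((h ^ 2 : ℂ) + I * h * (a x : ℂ)) * pd i (pd i u) x)) - u x := by
  simp only [pd_const_add_const_mul_ofReal ha]
  simp only [Finset.sum_add_distrib, ← Finset.mul_sum,
    mul_assoc, Ph, lap]
  ring

theorem continuous_sum_norm_pd_sq (hu : ContDiff ℝ 1 u) :
    Continuous (fun x => ∑ i : Fin d, ‖pd i u x‖ ^ 2) :=
  continuous_finsetSum _ fun i _ =>
    ((hu.pd (m := 0) (by norm_num) i).continuous.norm.pow 2)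

theorem hasCompactSupport_sum_norm_pd_sq (hsupp : HasCompactSupport u) :
    HasCompactSupport (fun x => ∑ i : Fin d, ‖pd i u x‖ ^ 2) := by
  refine hsupp.fderiv (𝕜 := ℝ) |>.mono fun x hx hx' => hx ?_
  simp [pd, hx']

theorem continuous_Ph (ha : ContDiff ℝ 1 a) (hu : ContDiff ℝ 2 u) (h : ℝ) :
    Continuous (Ph h a u) := by
  have h1 (i : Fin d) : ContDiff ℝ 1 (pd i u) := hu.pd (by norm_num) i
  have h2 (i : Fin d) : Continuous (pd i (pd i u)) :=
    ((h1 i).pd (m := 0) (by norm_num) i).continuous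
  have h3 (i : Fin d) : Continuous (pd i u) := (h1 i).continuous
  have h4 : Continuous (fderiv ℝ a) := ha.continuous_fderiv (by norm_num)
  have h5 := ha.continuous
  have h6 := hu.continuous
  unfold Ph lap
  fun_prop

theorem hasCompactSupport_Ph (hsupp : HasCompactSupport u) (h : ℝ) :
    HasCompactSupport (Ph h a u) := by
  refine HasCompactSupport.intro hsupp fun x hx => ?_
  have h2 (i : Fin d) : tsupport (pd i u) ⊆ tsupport u :=
    tsupport_fderiv_apply_subset ℝ _
  have h3 (i : Fin d) : pd i u x = 0 := image_eq_zero_of_notMem_tsupport fun hh => hx (h2 i hh)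
  have h4 (i : Fin d) : pd i (pd i u) x = 0 :=
    image_eq_zero_of_notMem_tsupport fun hh =>
      hx (h2 i (tsupport_fderiv_apply_subset ℝ _ hh))
  simp [Ph, lap, h3, h4, image_eq_zero_of_notMem_tsupport hx]

theorem integrable_mul_sum_norm_pd_sq (ha : Continuous a) (hu : ContDiff ℝ 1 u)
    (hsupp : HasCompactSupport u) :
    Integrable (fun x => a x * ∑ i, ‖pd i u x‖ ^ 2) :=
  (ha.mul (continuous_sum_norm_pd_sq hu)).integrable_of_hasCompactSupport
    (hasCompactSupport_sum_norm_pd_sq hsupp).mul_left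

/-- Green's identity for the operator `div(b∇·)`. -/
theorem integral_conj_mul_divergence {b : EuclideanSpace ℝ (Fin d) → ℂ} (hb : ContDiff ℝ 1 b)
    (hu : ContDiff ℝ 2 u) (hsupp : HasCompactSupport u) :
    ∫ x, conj (u x) * ∑ i, (pd i b x * pd i u x + b x * pd i (pd i u) x) =
      -∫ x, b x * ((∑ i, ‖pd i u x‖ ^ 2 : ℝ) : ℂ) := by
  have hu1 (i : Fin d) : ContDiff ℝ 1 (pd i u) := hu.pd (by norm_num) i
  have hbi (i : Fin d) : Continuous (pd i b) := (hb.pd (m := 0) (by norm_num) i).continuous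
  have hui (i : Fin d) : Continuous (pd i (pd i u)) :=
    ((hu1 i).pd (m := 0) (by norm_num) i).continuous
  have hcc : Continuous (fun x => conj (u x)) := continuous_conj.comp hu.continuous
  have hcs : HasCompactSupport (fun x => conj (u x)) :=
    hsupp.comp_left (g := fun z : ℂ => conj z) (map_zero _)
  have hint (i : Fin d) :
      Integrable (fun x => conj (u x) * (pd i b x * pd i u x + b x * pd i (pd i u) x)) :=
    (hcc.mul (((hbi i).mul (hu1 i).continuous).add
      (hb.continuous.mul (hui i)))).integrable_of_hasCompactSupport hcs.mul_right
  have hpi (i : Fin d) : Integrable (fun x => b x * ((‖pd i u x‖ ^ 2 : ℝ) : ℂ)) := by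
    refine Continuous.integrable_of_hasCompactSupport
      (hb.continuous.mul (continuous_ofReal.comp ((hu1 i).continuous.norm.pow 2)))
      (HasCompactSupport.mul_left ?_)
    exact (hsupp.pd i).comp_left (g := fun z : ℂ => ((‖z‖ ^ 2 : ℝ) : ℂ)) (by simp)
  simp only [Finset.mul_sum, ofReal_sum]
  rw [integral_finsetSum _ fun i _ => hint i, integral_finsetSum _ fun i _ => hpi i,
    ← Finset.sum_neg_distrib]
  exact Finset.sum_congr rfl fun i _ => integral_conj_mul_pd_mul_pd hb hu hsupp i

/-- Energy identity: testing `P_h u` against `u`. -/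
theorem integral_conj_mul_Ph (ha : ContDiff ℝ 1 a) (hu : ContDiff ℝ 2 u)
    (hsupp : HasCompactSupport u) (h : ℝ) :
    ∫ x, conj (u x) * Ph h a u x =
      ((h ^ 2 * (∫ x, ∑ i, ‖pd i u x‖ ^ 2) - ∫ x, ‖u x‖ ^ 2 : ℝ) : ℂ) +
        I * (h * ∫ x, a x * ∑ i, ‖pd i u x‖ ^ 2 : ℝ) := by
  have hb : ContDiff ℝ 1 (fun y => (h ^ 2 : ℂ) + I * h * (a y : ℂ)) :=
    contDiff_const.add (contDiff_const.mul (ofRealCLM.contDiff.comp ha))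
  have hu1 : ContDiff ℝ 1 u := hu.of_le (by norm_num)
  have hcc : Continuous (fun x => conj (u x)) := continuous_conj.comp hu.continuous
  have hcs : HasCompactSupport (fun x => conj (u x)) :=
    hsupp.comp_left (g := fun z : ℂ => conj z) (map_zero _)
  have hintu : Integrable (fun x => conj (u x) * u x) :=
    (hcc.mul hu.continuous).integrable_of_hasCompactSupport hcs.mul_right
  have hintP : Integrable (fun x => conj (u x) * Ph h a u x) :=
    (hcc.mul (continuous_Ph ha hu h)).integrable_of_hasCompactSupport hcs.mul_right
  have hGint : Integrable (fun x => ∑ i, ‖pd i u x‖ ^ 2) :=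
    (continuous_sum_norm_pd_sq hu1).integrable_of_hasCompactSupport
      (hasCompactSupport_sum_norm_pd_sq hsupp)
  have haGint := integrable_mul_sum_norm_pd_sq ha.continuous hu1 hsupp
  have hmass : ∫ x, conj (u x) * u x = ((∫ x, ‖u x‖ ^ 2 : ℝ) : ℂ) := by
    rw [← integral_complex_ofReal]
    refine integral_congr_ae (Eventually.of_forall fun x => ?_)
    simp [conj_mul']
  have hsplit : ∫ x, ((h ^ 2 : ℂ) + I * h * (a x : ℂ)) * ((∑ i, ‖pd i u x‖ ^ 2 : ℝ) : ℂ) =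
      (h ^ 2 : ℂ) * ((∫ x, ∑ i, ‖pd i u x‖ ^ 2 : ℝ) : ℂ) +
        I * h * ((∫ x, a x * ∑ i, ‖pd i u x‖ ^ 2 : ℝ) : ℂ) := by
    rw [← integral_complex_ofReal, ← integral_complex_ofReal, ← integral_const_mul,
      ← integral_const_mul,
      ← integral_add (hGint.ofReal.const_mul _) (haGint.ofReal.const_mul _)]
    refine integral_congr_ae (Eventually.of_forall fun x => ?_)
    simp only [ofReal_mul]
    ring
  have hgreen := integral_conj_mul_divergence hb hu hsupp
  have hP : ∫ x, (conj (u x) * Ph h a u x + conj (u x) * u x) =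
      ∫ x, ((h ^ 2 : ℂ) + I * h * (a x : ℂ)) * ((∑ i, ‖pd i u x‖ ^ 2 : ℝ) : ℂ) := by
    rw [← neg_eq_iff_eq_neg.mpr hgreen, ← integral_neg]
    refine integral_congr_ae (Eventually.of_forall fun x => ?_)
    simp only [Ph_eq_divergence_form ha]
    ring
  rw [integral_add hintP hintu, hmass, hsplit] at hP
  rw [eq_sub_of_add_eq hP]
  simp only [ofReal_mul, ofReal_sub, ofReal_pow]
  ring

end Energy

/-- Cauchy–Schwarz for the `L²` pairing of complex functions. -/
theorem norm_integral_conj_mul_le {α : Type*} [MeasurableSpace α] {μ : Measure α}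
    {f g : α → ℂ} (hf : MemLp f 2 μ) (hg : MemLp g 2 μ) :
    ‖∫ x, conj (f x) * g x ∂μ‖ ≤ √(∫ x, ‖f x‖ ^ 2 ∂μ) * √(∫ x, ‖g x‖ ^ 2 ∂μ) := by
  have key := integral_mul_norm_le_Lp_mul_Lq (μ := μ) (f := f) (g := g)
    Real.HolderConjugate.two_two (by simpa using hf) (by simpa using hg)
  simp only [Real.rpow_two, ← Real.sqrt_eq_rpow] at key
  refine (norm_integral_le_integral_norm _).trans (le_of_eq_of_le ?_ key)
  simp

/-- **Lemma 3.1 (1)–(2) of the paper in sequence form**: for a contradiction sequence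
(`h_n → 0`, `‖u_n‖_{L²} = 1`, `‖P_{h_n}u_n‖_{L²} = o(h_n)`) with damping `a` bounded,
nonnegative, `C¹` and satisfying `‖∇a‖ ≤ K a^{1/2}`:
(i) `‖h_n ∇u_n‖²_{L²} - 1 = o(h_n)`, and (ii) `∫ a ‖h_n∇u_n‖² = o(h_n²)`. -/
theorem stmt_5 (d : ℕ) (hd : 1 ≤ d)
    (a : EuclideanSpace ℝ (Fin d) → ℝ) (K : ℝ)
    (haC1 : ContDiff ℝ 1 a) (habd : ∃ C, ∀ x, a x ≤ C) (hapos : ∀ x, 0 ≤ a x)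
    (haK : ∀ x, ‖gradient a x‖ ≤ K * Real.sqrt (a x))
    (h : ℕ → ℝ) (u : ℕ → EuclideanSpace ℝ (Fin d) → ℂ)
    (hhpos : ∀ n, 0 < h n) (hh0 : Tendsto h atTop (nhds 0))
    (husm : ∀ n, ContDiff ℝ (⊤ : ℕ∞) (u n)) (husupp : ∀ n, HasCompactSupport (u n))
    (hunorm : ∀ n, (∫ x, ‖u n x‖ ^ 2) = 1)
    (hf : (fun n => Real.sqrt (∫ x, ‖Ph (h n) a (u n) x‖ ^ 2)) =o[atTop] h) :
    ((fun n => (h n) ^ 2 * (∫ x, ∑ i : Fin d, ‖pd i (u n) x‖ ^ 2) - 1) =o[atTop] h) ∧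
    ((fun n => ∫ x, a x * ((h n) ^ 2 * ∑ i : Fin d, ‖pd i (u n) x‖ ^ 2)) =o[atTop]
      (fun n => (h n) ^ 2)) := by
  have hu2 (n) : ContDiff ℝ 2 (u n) := contDiff_infty.1 (husm n) 2
  have hbound (n) :
      ‖∫ x, conj (u n x) * Ph (h n) a (u n) x‖ ≤ √(∫ x, ‖Ph (h n) a (u n) x‖ ^ 2) := by
    have hle := norm_integral_conj_mul_le (μ := volume)
      ((hu2 n).continuous.memLp_of_hasCompactSupport (husupp n))
      ((continuous_Ph haC1 (hu2 n) (h n)).memLp_of_hasCompactSupport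
        (hasCompactSupport_Ph (husupp n) (h n)))
    simpa [hunorm n] using hle
  have hpair : (fun n => ∫ x, conj (u n x) * Ph (h n) a (u n) x) =o[atTop] h :=
    (isBigO_of_le _ fun n => (hbound n).trans (le_abs_self _)).trans_isLittleO hf
  have hid (n) := integral_conj_mul_Ph haC1 (hu2 n) (husupp n) (h n)
  simp only [hid, hunorm] at hpair
  constructor
  · refine (isBigO_of_le _ fun n => ?_).trans_isLittleO hpair
    refine le_trans (le_of_eq ?_) (abs_re_le_norm _)
    rw [add_re, ofReal_re, re_mul_ofReal, I_re, zero_mul, add_zero, Real.norm_eq_abs]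
  · have him : (fun n => h n * ∫ x, a x * ∑ i : Fin d, ‖pd i (u n) x‖ ^ 2) =o[atTop] h := by
      refine (isBigO_of_le _ fun n => ?_).trans_isLittleO hpair
      refine le_trans (le_of_eq ?_) (abs_im_le_norm _)
      rw [add_im, ofReal_im, im_mul_ofReal, I_im, one_mul, zero_add, Real.norm_eq_abs]
    refine ((isBigO_refl h atTop).mul_isLittleO him).congr (fun n => ?_) fun n => (sq _).symm
    rw [← mul_assoc, ← integral_const_mul]
    refine integral_congr_ae (Eventually.of_forall fun x => ?_)
    ring

end
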